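/- Let R be a Noetherian ring and 𝔞 an ideal with dim R/𝔞 = 1. Let X• be a cochain complex of R-modules all of whose terms are 𝔞-weakly cofinite. Then every cohomology module H^i(X•) is 𝔞-weakly cofinite. -/

import Mathlib

open CategoryTheory

universe u

variable (R : Type u) [CommRing R]

/-- The `i`-th Ext module `Ext^i_R(N, M)` of `R`-modules. -/
noncomputable def extModule (i : ℕ) (N M : ModuleCat.{u} R) : ModuleCat.{u} R :=
  ((Ext R (ModuleCat.{u} R) i).obj (Opposite.op N)).obj M

/-- A module is weakly Laskerian if every quotient has finitely many associated primes. -/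
def IsWeaklyLaskerian (M : Type u) [AddCommGroup M] [Module R M] : Prop :=
  ∀ N : Submodule R M, (associatedPrimes R (M ⧸ N)).Finite

/-- `M` is `𝔞`-cofinite: `Supp M ⊆ V(𝔞)` and all `Ext^i_R(R/𝔞, M)` are finitely generated. -/
def IsCofinite (𝔞 : Ideal R) (M : ModuleCat.{u} R) : Prop :=
  Module.support R M ⊆ PrimeSpectrum.zeroLocus (𝔞 : Set R) ∧
    ∀ i : ℕ, Module.Finite R (extModule R i (ModuleCat.of R (R ⧸ 𝔞)) M)

/-- `M` is `𝔞`-weakly cofinite: `Supp M ⊆ V(𝔞)` and all `Ext^i_R(R/𝔞, M)` are weakly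
Laskerian. -/
def IsWeaklyCofinite (𝔞 : Ideal R) (M : ModuleCat.{u} R) : Prop :=
  Module.support R M ⊆ PrimeSpectrum.zeroLocus (𝔞 : Set R) ∧
    ∀ i : ℕ, IsWeaklyLaskerian R (extModule R i (ModuleCat.of R (R ⧸ 𝔞)) M)

/-- The Krull dimension of the support of a module. -/
noncomputable def suppDim (M : Type u) [AddCommGroup M] [Module R M] : WithBot ℕ∞ :=
  Order.krullDim (Module.support R M)

/-- The cohomological dimension `cd(𝔞, M) = sup {i | H^i_𝔞(M) ≠ 0}`, as an element of `ℕ∞`. -/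
noncomputable def cohomologicalDim (𝔞 : Ideal R) (M : ModuleCat.{u} R) : ℕ∞ :=
  ⨆ i ∈ {i : ℕ | Nontrivial ((localCohomology 𝔞 i).obj M)}, (i : ℕ∞)

/-- `p` is an attached prime of `M`: `p` is prime and is the annihilator of a quotient
of `M`. -/
def IsAttachedPrime (M : Type u) [AddCommGroup M] [Module R M] (p : Ideal R) : Prop :=
  p.IsPrime ∧ ∃ N : Submodule R M, p = Module.annihilator R (M ⧸ N)

open CategoryTheory.Abelian CochainComplex HomComplex in
lemma extMk_eq_zero_iff_zero {X Y : ModuleCat.{u} R} (P : ProjectiveResolution X)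
   (f : P.complex.X 0 ⟶ Y) (hf : P.complex.d 1 0 ≫ f = 0) :
   P.extMk f 1 rfl hf = 0 ↔ f = 0 := by
  simp only [← P.extEquivCohomologyClass.apply_eq_iff_eq,
    ProjectiveResolution.extEquivCohomologyClass_extMk, ProjectiveResolution.extEquivCohomologyClass_zero,
    CohomologyClass.mk_eq_zero_iff]
  rw [Cocycle.toSingleMk_mem_coboundaries_iff _ _ _ _ _ 1 (by simp)]
  have h1 : Limits.IsZero (P.cochainComplex.X 1) := P.cochainComplex.isZero_of_isStrictlyLE 0 1
  constructor
  · rintro ⟨g, hg⟩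
    rw [h1.eq_of_src g 0, Limits.comp_zero] at hg
    rw [← cancel_epi (P.cochainComplexXIso (-0) 0 rfl).hom, Limits.comp_zero]
    exact hg.symm
  · rintro rfl
    exact ⟨0, by simp⟩

lemma extMk_smul_aux {X Y : ModuleCat.{u} R} (P : ProjectiveResolution X) (n : ℕ)
    (f : P.complex.X n ⟶ Y) (hf : P.complex.d (n+1) n ≫ f = 0) (r : R) :
    P.extMk (r • f) (n+1) rfl (by simp [hf]) = r • P.extMk f (n+1) rfl hf := by
  rw [Abelian.Ext.smul_eq_comp_mk₀, P.extMk_comp_mk₀]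
  simp

/-- cocycles to Ext -/
noncomputable def cocyToExt {X Y : ModuleCat.{u} R} (P : ProjectiveResolution X) (n : ℕ) :
    LinearMap.ker ((P.complex.linearYonedaObj R Y).d n (n+1)).hom →ₗ[R] Abelian.Ext X Y n where
  toFun f := P.extMk (f.1 : P.complex.X n ⟶ Y) (n+1) rfl f.2
  map_add' f g := (P.add_extMk _ _ _ _ _ _).symm
  map_smul' r f := by
    obtain ⟨f, hf⟩ := f
    exact extMk_smul_aux R P n f hf r

lemma cocyToExt_surj {X Y : ModuleCat.{u} R} (P : ProjectiveResolution X) (n : ℕ) :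
    Function.Surjective (cocyToExt R (Y := Y) P n) := by
  intro a
  obtain ⟨f, hf, rfl⟩ := P.extMk_surjective a (n+1) rfl
  exact ⟨⟨f, hf⟩, rfl⟩

lemma cocyToExt_ker {X Y : ModuleCat.{u} R} (P : ProjectiveResolution X) (n : ℕ) (z) :
    cocyToExt R (Y := Y) P n z = 0 ↔
      ∃ w, (((P.complex.linearYonedaObj R Y).d ((ComplexShape.up ℕ).prev n) n).hom w) = z.1 := by
  obtain ⟨z, hz⟩ := z
  cases n with
  | zero =>
    have h0 : (P.complex.linearYonedaObj R Y).d ((ComplexShape.up ℕ).prev 0) 0 = 0 :=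
      HomologicalComplex.shape _ _ _ (by simp)
    rw [h0]
    refine (extMk_eq_zero_iff_zero R P z hz).trans ?_
    constructor
    · rintro rfl; exact ⟨0, rfl⟩
    · rintro ⟨w, hw⟩; exact hw.symm
  | succ n =>
    have h0 : (ComplexShape.up ℕ).prev (n+1) = n := by simp
    rw [h0]
    exact P.extMk_eq_zero_iff z _ rfl hz n rfl

lemma extEquiv (i : ℕ) (N M : ModuleCat.{u} R) :
    Nonempty (extModule R i N M ≃ₗ[R] Abelian.Ext N M i) := by
  let P := ProjectiveResolution.of N
  let K := P.complex.linearYonedaObj R M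
  let e1 : extModule R i N M ≅ K.homology i := P.isoExt i M
  let S := K.sc' ((ComplexShape.up ℕ).prev i) i (i+1)
  let e2 : K.homology i ≅ S.homology := 
    ShortComplex.homologyMapIso (K.isoSc' _ i (i+1) rfl (by simp))
  let e3 : S.homology ≅ S.moduleCatLeftHomologyData.H := S.moduleCatHomologyIso
  let e : extModule R i N M ≃ₗ[R] S.moduleCatLeftHomologyData.H := (e1 ≪≫ e2 ≪≫ e3).toLinearEquiv
  refine ⟨e.trans (LinearEquiv.trans (Submodule.quotEquivOfEq _ (LinearMap.ker (cocyToExt R (Y := M) P i)) ?_) 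
     (LinearMap.quotKerEquivOfSurjective _ (cocyToExt_surj R P i)))⟩
  ext z
  refine Iff.trans ?_ (cocyToExt_ker R P i z).symm
  constructor
  · rintro ⟨w, rfl⟩; exact ⟨w, rfl⟩
  · rintro ⟨w, hw⟩; exact ⟨w, Subtype.ext hw⟩


section WL
variable {R}
variable {A B C : Type u} [AddCommGroup A] [Module R A] [AddCommGroup B] [Module R B]
  [AddCommGroup C] [Module R C]

lemma wl_of_surj (f : A →ₗ[R] B) (hf : Function.Surjective f) (h : IsWeaklyLaskerian R A) :
    IsWeaklyLaskerian R B := by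
  intro N
  have hs : Function.Surjective (N.mkQ ∘ₗ f) := (Submodule.mkQ_surjective N).comp hf
  have e := (LinearMap.quotKerEquivOfSurjective _ hs)
  rw [← LinearEquiv.AssociatedPrimes.eq e]
  exact h _

lemma wl_of_inj (f : A →ₗ[R] B) (hf : Function.Injective f) (h : IsWeaklyLaskerian R B) :
    IsWeaklyLaskerian R A := by
  intro N
  refine (h (N.map f)).subset (associatedPrimes.subset_of_injective
    (f := Submodule.mapQ N (N.map f) f (Submodule.le_comap_map f N)) ?_)
  rw [← LinearMap.ker_eq_bot, Submodule.ker_mapQ, Submodule.comap_map_eq_of_injective hf]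
  simp [Submodule.mkQ_map_self]

lemma wl_of_equiv (e : A ≃ₗ[R] B) (h : IsWeaklyLaskerian R A) : IsWeaklyLaskerian R B :=
  wl_of_surj e.toLinearMap e.surjective h

lemma wl_of_sub_quot (K : Submodule R B) (h1 : IsWeaklyLaskerian R K)
    (h2 : IsWeaklyLaskerian R (B ⧸ K)) : IsWeaklyLaskerian R B := by
  intro N
  let P := K.map N.mkQ
  have hP : IsWeaklyLaskerian R P := 
    wl_of_surj (N.mkQ.submoduleMap K) (N.mkQ.submoduleMap_surjective K) h1
  have hQ : IsWeaklyLaskerian R ((B ⧸ N) ⧸ P) :=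
    wl_of_surj (Submodule.mapQ K P N.mkQ (Submodule.le_comap_map _ _))
      (by
        intro x
        obtain ⟨x, rfl⟩ := Submodule.mkQ_surjective _ x
        obtain ⟨x, rfl⟩ := Submodule.mkQ_surjective _ x
        exact ⟨K.mkQ x, rfl⟩) h2
  have e1 : (associatedPrimes R P).Finite := by
    rw [← LinearEquiv.AssociatedPrimes.eq (Submodule.quotEquivOfEqBot (⊥ : Submodule R P) rfl)]
    exact hP ⊥
  have e2 : (associatedPrimes R ((B ⧸ N) ⧸ P)).Finite := by
    rw [← LinearEquiv.AssociatedPrimes.eq (Submodule.quotEquivOfEqBot (⊥ : Submodule R ((B ⧸ N) ⧸ P)) rfl)]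
    exact hQ ⊥
  exact (e1.union e2).subset (associatedPrimes.subset_union_of_exact (f := P.subtype) (g := P.mkQ)
    P.subtype_injective (LinearMap.exact_subtype_mkQ P))

lemma wl_ass_finite (h : IsWeaklyLaskerian R A) : (associatedPrimes R A).Finite := by
  rw [← LinearEquiv.AssociatedPrimes.eq (Submodule.quotEquivOfEqBot (⊥ : Submodule R A) rfl)]
  exact h ⊥

lemma wl_of_exact (f : A →ₗ[R] B) (g : B →ₗ[R] C) (hfg : ∀ b, g b = 0 → ∃ a, f a = b)
    (h1 : IsWeaklyLaskerian R A) (h2 : IsWeaklyLaskerian R C) : IsWeaklyLaskerian R B := by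
  refine wl_of_sub_quot (LinearMap.ker g) ?_ ?_
  · have : IsWeaklyLaskerian R (LinearMap.range f) :=
      wl_of_surj f.rangeRestrict f.surjective_rangeRestrict h1
    refine wl_of_inj (Submodule.inclusion (p := LinearMap.ker g) (p' := LinearMap.range f) ?_)
      (Submodule.inclusion_injective _) this
    intro b hb
    exact hfg b hb
  · exact wl_of_equiv g.quotKerEquivRange.symm
      (wl_of_inj (Submodule.subtype _) (Submodule.subtype_injective _) h2)

lemma wl_subsingleton [Subsingleton A] : IsWeaklyLaskerian R A := by
  intro N
  rw [associatedPrimes.eq_empty_of_subsingleton]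
  exact Set.finite_empty

lemma wl_pi (h : IsWeaklyLaskerian R A) (n : ℕ) : IsWeaklyLaskerian R (Fin n → A) := by
  induction n with
  | zero => exact wl_subsingleton
  | succ n ih =>
    refine wl_of_exact (A := Fin n → A) (C := A)
      (LinearMap.pi (fun i : Fin (n+1) => Fin.cases 0 (fun j => LinearMap.proj j) i))
      (LinearMap.proj 0) ?_ ih h
    intro b hb
    refine ⟨fun j => b j.succ, ?_⟩
    ext i
    refine Fin.cases ?_ (fun j => ?_) i
    · simpa using hb.symm
    · simp

lemma wl_of_finite [IsNoetherianRing R] [Module.Finite R A] : IsWeaklyLaskerian R A :=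
  fun N => associatedPrimes.finite R _

lemma wl_of_support_finite [IsNoetherianRing R] (h : (Module.support R A).Finite) : IsWeaklyLaskerian R A := by
  intro N
  have : (Module.support R (A ⧸ N)).Finite :=
    h.subset (Module.support_subset_of_surjective N.mkQ N.mkQ_surjective)
  refine (this.image PrimeSpectrum.asIdeal).subset ?_
  intro p hp
  have := hp.isPrime
  refine ⟨⟨p, this⟩, ?_, rfl⟩
  obtain ⟨-, m, hm⟩ := (isAssociatedPrime_iff).1 hp
  rw [Module.mem_support_iff']
  refine ⟨m, fun r hr h0 => hr ?_⟩
  change r ∈ p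
  rw [hm]
  simpa [Submodule.mem_colon_singleton] using h0

end WL

section ExtWL
open CategoryTheory.Abelian
variable {R}

/-- Postcomposition on Ext as a linear map. -/
noncomputable abbrev pcl (R : Type u) [CommRing R] (X : ModuleCat.{u} R) {Y Z : ModuleCat.{u} R} {n : ℕ}
    (β : Abelian.Ext Y Z n) {a b : ℕ} (h : a + n = b) :
    Abelian.Ext X Y a →ₗ[R] Abelian.Ext X Z b :=
  β.postcompOfLinear R X h

/-- `Ext^i(N, M)` is weakly Laskerian. -/
def XW (N : Type u) [AddCommGroup N] [Module R N] (i : ℕ) (M : Type u) [AddCommGroup M] [Module R M] : Prop :=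
  IsWeaklyLaskerian R (Abelian.Ext (ModuleCat.of R N) (ModuleCat.of R M) i)

lemma XW_iff (N : Type u) [AddCommGroup N] [Module R N] (i : ℕ) (M : ModuleCat.{u} R) :
    IsWeaklyLaskerian R (extModule R i (ModuleCat.of R N) M) ↔ XW (R := R) N i M := by
  obtain ⟨e⟩ := extEquiv R i (ModuleCat.of R N) M
  exact ⟨wl_of_equiv e, wl_of_equiv e.symm⟩

variable (N : Type u) [AddCommGroup N] [Module R N]
variable {A B C : Type u} [AddCommGroup A] [Module R A] [AddCommGroup B] [Module R B]
  [AddCommGroup C] [Module R C]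

lemma XW_zero_iff : XW (R := R) N 0 A ↔ IsWeaklyLaskerian R (N →ₗ[R] A) := by
  let e : Abelian.Ext (ModuleCat.of R N) (ModuleCat.of R A) 0 ≃ₗ[R] (N →ₗ[R] A) :=
    (Ext.linearEquiv₀ (R := R)).trans ModuleCat.homLinearEquiv
  exact ⟨wl_of_equiv e, wl_of_equiv e.symm⟩

lemma XW_congr (e : A ≃ₗ[R] B) (i : ℕ) (h : XW (R := R) N i A) : XW (R := R) N i B := by
  refine wl_of_surj (pcl R (ModuleCat.of R N)
    (Ext.mk₀ (ModuleCat.ofHom e.toLinearMap)) (add_zero i)) ?_ h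
  intro x
  refine ⟨x.comp (Ext.mk₀ (ModuleCat.ofHom e.symm.toLinearMap)) (add_zero i), ?_⟩
  simp [← ModuleCat.ofHom_comp]

variable (f : A →ₗ[R] B) (g : B →ₗ[R] C)

/-- the short exact sequence -/
lemma ses_exists (hf : Function.Injective f) (hg : Function.Surjective g)
    (hfg : Function.Exact f g) : ∃ S : ShortComplex (ModuleCat.{u} R), S.ShortExact ∧
   S = ShortComplex.mk (ModuleCat.ofHom f) (ModuleCat.ofHom g) (by ext x; exact hfg.apply_apply_eq_zero x) :=
  ⟨_, ModuleCat.shortComplex_shortExact _ hfg hf hg, rfl⟩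

lemma XW_two (hf : Function.Injective f) (hg : Function.Surjective g)
    (hfg : Function.Exact f g) (i : ℕ) (h1 : XW (R := R) N i A) (h3 : XW (R := R) N i C) : XW (R := R) N i B := by
  obtain ⟨S, hS, rfl⟩ := ses_exists f g hf hg hfg
  exact wl_of_exact (pcl R (ModuleCat.of R N) (Ext.mk₀ (ModuleCat.ofHom f)) (add_zero i))
    (pcl R (ModuleCat.of R N) (Ext.mk₀ (ModuleCat.ofHom g)) (add_zero i))
    (fun b hb => Ext.covariant_sequence_exact₂ _ hS b hb) h1 h3

lemma XW_one (hf : Function.Injective f) (hg : Function.Surjective g)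
    (hfg : Function.Exact f g) (i : ℕ) (h3 : XW (R := R) N i C) (h2 : XW (R := R) N (i+1) B) : XW (R := R) N (i+1) A := by
  obtain ⟨S, hS, hh⟩ := ses_exists f g hf hg hfg
  subst hh
  exact wl_of_exact (pcl R (ModuleCat.of R N) hS.extClass rfl)
    (pcl R (ModuleCat.of R N) (Ext.mk₀ (ModuleCat.ofHom f)) (add_zero (i+1)))
    (fun b hb => Ext.covariant_sequence_exact₁ _ hS b hb rfl) h3 h2

lemma XW_three (hf : Function.Injective f) (hg : Function.Surjective g)
    (hfg : Function.Exact f g) (i : ℕ) (h2 : XW (R := R) N i B) (h1 : XW (R := R) N (i+1) A) : XW (R := R) N i C := by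
  obtain ⟨S, hS, hh⟩ := ses_exists f g hf hg hfg
  subst hh
  exact wl_of_exact 
    (pcl R (ModuleCat.of R N) (Ext.mk₀ (ModuleCat.ofHom g)) (add_zero i))
    (pcl R (ModuleCat.of R N) hS.extClass rfl)
    (fun b hb => Ext.covariant_sequence_exact₃ _ hS b rfl hb) h2 h1

lemma XW_one_zero (hf : Function.Injective f) (h2 : XW (R := R) N 0 B) : XW (R := R) N 0 A := by
  rw [XW_zero_iff] at h2 ⊢
  refine wl_of_inj (LinearMap.compRight R f) ?_ h2
  intro a b hab
  ext x
  exact hf (LinearMap.congr_fun hab x)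

lemma XW_of_wl [IsNoetherianRing R] [Module.Finite R N] (h : IsWeaklyLaskerian R A) (i : ℕ) :
    XW (R := R) N i A := by
  induction i generalizing N with
  | zero =>
    rw [XW_zero_iff]
    obtain ⟨n, p, hp⟩ := Module.Finite.exists_fin' R N
    have h1 : IsWeaklyLaskerian R ((Fin n → R) →ₗ[R] A) :=
      wl_of_equiv ((Pi.basisFun R (Fin n)).constr R) (wl_pi h n)
    refine wl_of_inj (LinearMap.lcomp R A p) ?_ h1
    intro a b hab
    ext x
    obtain ⟨y, rfl⟩ := hp x
    exact LinearMap.congr_fun hab y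
  | succ n ih =>
    obtain ⟨F, _, _, _, _, f, surjf⟩ := Module.exists_finite_presentation R N
    let exac := LinearMap.shortExact_shortComplexKer surjf
    exact wl_of_surj (exac.extClass.precompOfLinear R (ModuleCat.of R A) (add_comm 1 n))
      (precomp_extClass_surjective_of_projective_X₂ _ exac n) (ih (LinearMap.ker f))

/-- If `x` kills `N` and `x : M → M` factors as `g ∘ f` with `f`, `g` having weakly Laskerian
kernels on `Ext`, then `Ext` is weakly Laskerian. -/
lemma XW_of_factor {A B : Type u} [AddCommGroup A] [Module R A] [AddCommGroup B] [Module R B]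
    (x : R) (hx : ∀ n : N, x • n = 0) (i : ℕ) (f : A →ₗ[R] B) (g : B →ₗ[R] A)
    (hgf : ∀ a, g (f a) = x • a)
    (h1 : IsWeaklyLaskerian R (LinearMap.ker (pcl R (ModuleCat.of R N) (Ext.mk₀ (ModuleCat.ofHom f)) (add_zero i))))
    (h2 : IsWeaklyLaskerian R (LinearMap.ker (pcl R (ModuleCat.of R N) (Ext.mk₀ (ModuleCat.ofHom g)) (add_zero i)))) :
    XW (R := R) N i A := by
  have key : ∀ e : Abelian.Ext (ModuleCat.of R N) (ModuleCat.of R A) i,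
    (e.comp (Ext.mk₀ (ModuleCat.ofHom f)) (add_zero i)).comp (Ext.mk₀ (ModuleCat.ofHom g)) (add_zero i) = 0 := by
    intro e
    have h3 : ModuleCat.ofHom f ≫ ModuleCat.ofHom g = x • 𝟙 (ModuleCat.of R A) := by
      ext a; exact hgf a
    have h4 : x • 𝟙 (ModuleCat.of R N) = 0 := by
      ext a; exact hx a
    rw [Ext.comp_assoc_of_second_deg_zero, Ext.mk₀_comp_mk₀, h3, ← Ext.smul_eq_comp_mk₀]
    conv_lhs => rw [← Ext.mk₀_id_comp e]
    rw [← Ext.smul_comp, ← Ext.mk₀_smul, h4]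
    simp
  refine wl_of_exact (LinearMap.ker (pcl R (ModuleCat.of R N) (Ext.mk₀ (ModuleCat.ofHom f)) (add_zero i))).subtype
    (LinearMap.codRestrict _ (pcl R (ModuleCat.of R N) (Ext.mk₀ (ModuleCat.ofHom f)) (add_zero i)) (fun e => key e)) ?_ h1 h2
  intro b hb
  exact ⟨⟨b, congrArg Subtype.val hb⟩, rfl⟩

lemma wl_ker_postcomp (i : ℕ) (hf : Function.Injective f) (hg : Function.Surjective g)
  (hfg : Function.Exact f g) (h1 : XW (R := R) N i A) :
    IsWeaklyLaskerian R (LinearMap.ker (pcl R (ModuleCat.of R N) (Ext.mk₀ (ModuleCat.ofHom g)) (add_zero i))) := by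
  obtain ⟨S, hS, rfl⟩ := ses_exists f g hf hg hfg
  refine wl_of_inj (Submodule.inclusion (p' := LinearMap.range (pcl R (ModuleCat.of R N) (Ext.mk₀ (ModuleCat.ofHom f)) (add_zero i))) ?_)
    (Submodule.inclusion_injective _) (wl_of_surj _ (LinearMap.surjective_rangeRestrict _) h1)
  intro b hb
  exact Ext.covariant_sequence_exact₂ _ hS b hb

lemma wl_ker_postcomp_inj (i : ℕ) (hf : Function.Injective f) (hg : Function.Surjective g)
  (hfg : Function.Exact f g) (h3 : ∀ i, XW (R := R) N i C) :
    IsWeaklyLaskerian R (LinearMap.ker (pcl R (ModuleCat.of R N) (Ext.mk₀ (ModuleCat.ofHom f)) (add_zero i))) := by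
  obtain ⟨S, hS, hh⟩ := ses_exists f g hf hg hfg
  subst hh
  cases i with
  | zero =>
    have hm : Mono (ModuleCat.ofHom f) := (ModuleCat.mono_iff_injective _).2 hf
    have := Ext.postcomp_mk₀_injective_of_mono (ModuleCat.of R N) (ModuleCat.ofHom f)
    have h : LinearMap.ker (pcl R (ModuleCat.of R N) (Ext.mk₀ (ModuleCat.ofHom f)) (add_zero 0)) = ⊥ :=
      LinearMap.ker_eq_bot.2 this
    rw [h]
    exact wl_subsingleton
  | succ i =>
    refine wl_of_inj (Submodule.inclusion (p' := LinearMap.range (pcl R (ModuleCat.of R N) hS.extClass rfl)) ?_)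
      (Submodule.inclusion_injective _) (wl_of_surj _ (LinearMap.surjective_rangeRestrict _) (h3 i))
    intro b hb
    exact Ext.covariant_sequence_exact₁ _ hS b hb rfl
end ExtWL


section ArtLemmas

lemma art_of_torsion_one {S : Type*} [CommRing S] {A : Type*} [AddCommGroup A] [Module S A] (x : S)
    (ht : ∀ a : A, ∃ n : ℕ, x ^ n • a = 0)
    (hK : IsArtinian S (LinearMap.ker (LinearMap.lsmul S A x))) : IsArtinian S A := by
  rw [← monotone_stabilizes_iff_artinian]
  intro N
  let K := LinearMap.ker (LinearMap.lsmul S A x)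
  let W : ℕ → ℕ → Submodule S K := fun j n =>
    ((OrderDual.ofDual (N j)).map (LinearMap.lsmul S A (x ^ n))).comap K.subtype
  have hWmem : ∀ j n (y : K), y ∈ W j n ↔ ∃ a ∈ OrderDual.ofDual (N j), x ^ n • a = y := by
    intro j n y; rfl
  have hWj : ∀ j j' n, j ≤ j' → W j' n ≤ W j n := by
    intro j j' n hj y hy
    rw [hWmem] at hy ⊢
    obtain ⟨a, ha, h⟩ := hy
    exact ⟨a, N.monotone hj ha, h⟩
  have hWn : ∀ j n n', n ≤ n' → W j n' ≤ W j n := by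
    intro j n n' hn y hy
    rw [hWmem] at hy ⊢
    obtain ⟨a, ha, h⟩ := hy
    refine ⟨x ^ (n' - n) • a, Submodule.smul_mem _ _ ha, ?_⟩
    rw [← h, smul_smul, ← pow_add]; congr 2; omega
  have stab : ∀ V : ℕ → Submodule S K, (∀ i j, i ≤ j → V j ≤ V i) → ∃ n, ∀ m, n ≤ m → V n = V m := by
    intro V hV
    exact monotone_stabilizes_iff_artinian.2 hK ⟨fun n => OrderDual.toDual (V n), fun i j h => hV i j h⟩
  obtain ⟨k, hk⟩ := stab (fun n => W n n) (fun i j h => (hWj i j j h).trans (hWn i i j h))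
  choose f hf using fun n => stab (fun j => W j n) (fun i j h => hWj i j n h)
  let J := k + ∑ n ∈ Finset.range k, f n
  have hJk : k ≤ J := Nat.le_add_right _ _
  have hJf : ∀ n < k, f n ≤ J := fun n hn =>
    (Finset.single_le_sum (f := f) (fun _ _ => Nat.zero_le _) (Finset.mem_range.2 hn)).trans (Nat.le_add_left _ _)
  have hW : ∀ j, J ≤ j → ∀ n, W J n ≤ W j n := by
    intro j hj n
    rcases lt_or_ge n k with hn | hn
    · have h1 := hf n J (hJf n hn)
      have h2 := hf n j ((hJf n hn).trans hj)
      exact (h1.symm.trans h2).le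
    · have h1 : W J n ≤ W k k := (hWj k J n hJk).trans (hWn k k n hn)
      have h2 := hk (max j n) (hn.trans (le_max_right _ _))
      refine h1.trans (h2.le.trans ?_)
      exact (hWj j _ _ (le_max_left _ _)).trans (hWn j _ _ (le_max_right _ _))
  refine ⟨J, fun j hj => ?_⟩
  have key : ∀ n : ℕ, ∀ a ∈ OrderDual.ofDual (N J), x ^ n • a = 0 → a ∈ OrderDual.ofDual (N j) := by
    intro n
    induction n with
    | zero => intro a _ h; simp at h; rw [h]; exact Submodule.zero_mem _
    | succ n ih =>
      intro a ha h
      have hy : x ^ n • a ∈ K := by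
        change x • x ^ n • a = 0
        rw [smul_smul, ← pow_succ', h]
      obtain ⟨b, hb, hab⟩ := (hWmem _ _ _).1 (hW j hj n ((hWmem J n ⟨_, hy⟩).2 ⟨a, ha, rfl⟩))
      have := ih (a - b) (Submodule.sub_mem _ ha (N.monotone hj hb)) (by
        rw [smul_sub]; exact sub_eq_zero.2 hab.symm)
      simpa using Submodule.add_mem _ this hb
  have hle : OrderDual.ofDual (N J) ≤ OrderDual.ofDual (N j) := by
    intro a ha
    obtain ⟨n, hn⟩ := ht a
    exact key n a ha hn
  exact le_antisymm (N.monotone hj) hle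

lemma art_of_torsion {S : Type*} [CommRing S] (s : Finset S) :
    ∀ {A : Type*} [AddCommGroup A] [Module S A],
    (∀ x ∈ s, ∀ a : A, ∃ n : ℕ, x ^ n • a = 0) →
    IsArtinian S (Submodule.torsionBySet S A (s : Set S)) → IsArtinian S A := by
  classical
  induction s using Finset.induction_on with
  | empty =>
    intro A _ _ _ h
    have : Submodule.torsionBySet S A ((∅ : Finset S) : Set S) = ⊤ := by
      ext; simp [Submodule.mem_torsionBySet_iff]
    rw [this] at h
    exact isArtinian_of_linearEquiv Submodule.topEquiv
  | insert x s hx ih =>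
    intro A _ _ ht h
    refine art_of_torsion_one x (ht x (by simp)) (ih ?_ ?_)
    · intro y hy a
      obtain ⟨n, hn⟩ := ht y (by simp [hy]) a.1
      exact ⟨n, Subtype.ext hn⟩
    · let K := LinearMap.ker (LinearMap.lsmul S A x)
      let T := Submodule.torsionBySet S K (s : Set S)
      refine isArtinian_of_injective (LinearMap.codRestrict (Submodule.torsionBySet S A ((insert x s : Finset S) : Set S)) (K.subtype ∘ₗ T.subtype) ?_) ?_
      · rintro ⟨⟨a, ha⟩, ha'⟩
        rw [Submodule.mem_torsionBySet_iff] at ha' ⊢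
        rintro ⟨y, hy⟩
        simp only [Finset.coe_insert, Set.mem_insert_iff] at hy
        rcases hy with rfl | hy
        · exact ha
        · exact congrArg Subtype.val (ha' ⟨y, hy⟩)
      · intro a b hab
        have h2 : a.1.1 = b.1.1 := by simpa using Subtype.ext_iff.1 hab
        exact Subtype.ext (Subtype.ext h2)

lemma semisimple_of_killed {S : Type*} [CommRing S] (m : Ideal S) [m.IsMaximal] {A : Type*} [AddCommGroup A] [Module S A]
    (h : Module.IsTorsionBySet S A (m : Set S)) : IsSemisimpleModule S A := by
  let := h.module
  let : Field (S ⧸ m) := Ideal.Quotient.field m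
  rw [← h.isSemisimpleModule_iff]
  infer_instance

lemma noeth_of_art_killed {S : Type*} [CommRing S] (m : Ideal S) [m.IsMaximal] (k : ℕ) :
    ∀ {A : Type*} [AddCommGroup A] [Module S A], IsArtinian S A →
    (∀ x ∈ m ^ k, ∀ a : A, x • a = 0) → IsNoetherian S A := by
  induction k with
  | zero =>
    intro A _ _ _ h
    have : Subsingleton A := ⟨fun a b => by
      have h1 := h 1 (by simp) a
      have h2 := h 1 (by simp) b
      simp at h1 h2
      rw [h1, h2]⟩
    infer_instance
  | succ k ih =>
    intro A _ _ _ h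
    let N : Submodule S A := m • ⊤
    have h1 : IsNoetherian S N := by
      refine ih inferInstance ?_
      rintro x hx ⟨a, ha⟩
      refine Subtype.ext ?_
      change x • a = 0
      refine Submodule.smul_induction_on ha ?_ ?_
      · intro r hr n _
        rw [smul_smul]
        exact h _ (by rw [pow_succ]; exact Ideal.mul_mem_mul hx hr) n
      · intro a b ha hb
        rw [smul_add, ha, hb, add_zero]
    have h2 : IsNoetherian S (A ⧸ N) := by
      have : IsSemisimpleModule S (A ⧸ N) := semisimple_of_killed m (by
        rintro a ⟨x, hx⟩
        obtain ⟨a, rfl⟩ := N.mkQ_surjective a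
        rw [← map_smul]
        exact (Submodule.Quotient.mk_eq_zero N).2 (Submodule.smul_mem_smul hx trivial))
      have hart : IsArtinian S (A ⧸ N) := inferInstance
      exact ((IsSemisimpleModule.finite_tfae (R := S) (M := A ⧸ N)).out 1 2).2 hart
    exact (isNoetherian_iff_submodule_quotient N).2 ⟨h1, h2⟩

/-- Fitting-type dichotomy and attached primes for Artinian modules. -/
lemma artinian_cofinite_mul {S : Type*} [CommRing S] [IsNoetherianRing S] {A : Type*} [AddCommGroup A] [Module S A]
    [IsArtinian S A] (b : Ideal S)
    (hb : ∀ (N : Submodule S A) (k : ℕ), (∀ x ∈ b ^ k, ∀ a ∈ N, x • a = 0) → N.FG) (N : Submodule S A) :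
    ∃ Q : Finset (Ideal S), (∀ q ∈ Q, q.IsPrime ∧ ¬ b ≤ q) ∧
      ∀ x ∈ b, (∀ q ∈ Q, x ∉ q) → ∃ L : Submodule S A, L.FG ∧ 
        N ≤ N.map (LinearMap.lsmul S A x) ⊔ L := by
  classical
  induction N using IsWellFounded.induction (· < · : Submodule S A → Submodule S A → Prop) with
  | ind N ih =>
  by_cases hN : ∃ N1 N2 : Submodule S A, N1 < N ∧ N2 < N ∧ N1 ⊔ N2 = N
  · obtain ⟨N1, N2, h1, h2, h12⟩ := hN
    obtain ⟨Q1, hQ1, H1⟩ := ih N1 h1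
    obtain ⟨Q2, hQ2, H2⟩ := ih N2 h2
    refine ⟨Q1 ∪ Q2, ?_, ?_⟩
    · intro q hq
      rcases Finset.mem_union.1 hq with h | h
      exacts [hQ1 q h, hQ2 q h]
    · intro x hx hxq
      obtain ⟨L1, f1, l1⟩ := H1 x hx (fun q hq => hxq q (Finset.mem_union_left _ hq))
      obtain ⟨L2, f2, l2⟩ := H2 x hx (fun q hq => hxq q (Finset.mem_union_right _ hq))
      refine ⟨L1 ⊔ L2, f1.sup f2, ?_⟩
      rw [← h12, Submodule.map_sup]
      refine sup_le (l1.trans ?_) (l2.trans ?_)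
      · exact sup_le_sup le_sup_left le_sup_left
      · exact sup_le_sup le_sup_right le_sup_right
  · push Not at hN
    have dich : ∀ x : S, (∃ k : ℕ, ∀ a ∈ N, x ^ k • a = 0) ∨ N.map (LinearMap.lsmul S A x) = N := by
      intro x
      have hmono : ∀ y : S, N.map (LinearMap.lsmul S A y) ≤ N := by
        rintro y _ ⟨a, ha, rfl⟩
        exact N.smul_mem y ha
      by_cases hx : N.map (LinearMap.lsmul S A x) = N
      · exact Or.inr hx
      left
      obtain ⟨k, hk⟩ := monotone_stabilizes_iff_artinian.2 ‹IsArtinian S A›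
        ⟨fun n => OrderDual.toDual (N.map (LinearMap.lsmul S A (x ^ n))), by
          intro i j hij
          rintro _ ⟨a, ha, rfl⟩
          refine ⟨x ^ (j - i) • a, N.smul_mem _ ha, ?_⟩
          simp only [LinearMap.lsmul_apply]
          rw [smul_smul, ← pow_add]; congr 2; omega⟩
      have hk' : ∀ m, k ≤ m → N.map (LinearMap.lsmul S A (x ^ k)) ≤ N.map (LinearMap.lsmul S A (x ^ m)) :=
        fun m hm => (congrArg OrderDual.ofDual (hk m hm)).le
      refine ⟨k, ?_⟩
      let N2 := N ⊓ LinearMap.ker (LinearMap.lsmul S A (x ^ k))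
      have hsum : N.map (LinearMap.lsmul S A (x ^ (k+1))) ⊔ N2 = N := by
        refine le_antisymm (sup_le (hmono _) inf_le_left) ?_
        intro a ha
        obtain ⟨c, hc, hca⟩ := hk' (k + (k+1)) (by omega) ⟨a, ha, rfl⟩
        simp only [LinearMap.lsmul_apply] at hca
        refine Submodule.mem_sup.2 ⟨x ^ (k+1) • c, ⟨c, hc, rfl⟩, a - x ^ (k+1) • c, ⟨N.sub_mem ha (N.smul_mem _ hc), ?_⟩, by abel⟩
        change x ^ k • (a - x ^ (k+1) • c) = 0
        rw [smul_sub, smul_smul, ← pow_add, hca, sub_self]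
      have h1 : N.map (LinearMap.lsmul S A (x ^ (k+1))) < N := by
        refine lt_of_le_of_ne (hmono _) ?_
        intro h
        apply hx
        refine le_antisymm (hmono _) ?_
        rw [← h]
        conv_rhs => rw [h]
        rintro _ ⟨a, ha, rfl⟩
        refine ⟨x ^ k • a, N.smul_mem _ ha, ?_⟩
        simp only [LinearMap.lsmul_apply]
        rw [smul_smul, ← pow_succ']
      have h2 : N2 = N := by
        by_contra h
        exact hN _ N2 h1 (lt_of_le_of_ne inf_le_left h) hsum
      intro a ha
      rw [← h2] at ha
      exact ha.2
    by_cases hN0 : N = ⊥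
    · refine ⟨∅, by simp, fun x _ _ => ⟨⊥, Submodule.fg_bot, by rw [hN0]; exact bot_le⟩⟩
    let I : Ideal S := N.annihilator
    by_cases hbP : b ≤ I.radical
    · obtain ⟨k, hk⟩ := Ideal.exists_pow_le_of_le_radical_of_fg hbP (IsNoetherian.noetherian b)
      refine ⟨∅, by simp, fun x _ _ => ⟨N, hb N k ?_, le_sup_right⟩⟩
      intro x hx a ha
      exact Submodule.mem_annihilator.1 (hk hx) a ha
    · have hmem : ∀ x, x ∈ I.radical ↔ ∃ k : ℕ, ∀ a ∈ N, x ^ k • a = 0 := by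
        intro x
        simp only [Ideal.mem_radical_iff, I, Submodule.mem_annihilator]
      refine ⟨{I.radical}, ?_, ?_⟩
      · simp only [Finset.mem_singleton, forall_eq]
        refine ⟨⟨?_, ?_⟩, hbP⟩
        · rw [Ne, Ideal.eq_top_iff_one, hmem]
          rintro ⟨k, hk⟩
          apply hN0
          rw [eq_bot_iff]
          intro a ha
          simpa using hk a ha
        · intro x y hxy
          by_contra! hcon
          have hx := (dich x).resolve_left (fun h => hcon.1 ((hmem x).2 h))
          have hy := (dich y).resolve_left (fun h => hcon.2 ((hmem y).2 h))
          obtain ⟨k, hk⟩ := (hmem _).1 hxy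
          have hsurj : ∀ k : ℕ, ∀ a ∈ N, ∃ c ∈ N, (x * y) ^ k • c = a := by
            intro k
            induction k with
            | zero => exact fun a ha => ⟨a, ha, by simp⟩
            | succ k ihk =>
              intro a ha
              obtain ⟨c, hc, rfl⟩ := ihk a ha
              rw [← hx] at hc
              obtain ⟨d, hd, rfl⟩ := hc
              have hd' : d ∈ N := hd
              rw [← hy] at hd'
              obtain ⟨e, he, rfl⟩ := hd'
              refine ⟨e, he, ?_⟩
              simp only [LinearMap.lsmul_apply, smul_smul]
              rw [pow_succ]
          apply hN0
          rw [eq_bot_iff]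
          intro a ha
          obtain ⟨c, hc, rfl⟩ := hsurj k a ha
          exact hk c hc
      · intro x _ hx
        refine ⟨⊥, Submodule.fg_bot, ?_⟩
        have := (dich x).resolve_left (fun h => hx _ (by simp) ((hmem x).2 h))
        rw [this]; exact le_sup_left

end ArtLemmas


section LocLemmas
variable {R}

lemma wl_generic_fg {F : Type u} [AddCommGroup F] [Module R F] (p : Ideal R) [p.IsPrime] [IsNoetherianRing R]
    (hinf : (PrimeSpectrum.zeroLocus (p : Set R)).Infinite)
    (hF : Module.IsTorsionBySet R F (p : Set R)) (h : IsWeaklyLaskerian R F) :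
    ∃ N : Submodule R F, N.FG ∧ ∀ f : F, ∃ s ∉ p, s • f ∈ N := by
  classical
  let _ := hF.module
  have hmk : ∀ (r : R) (f : F), (Ideal.Quotient.mk p r) • f = r • f := fun r f => rfl
  have : IsScalarTower R (R ⧸ p) F := hF.isScalarTower
  obtain ⟨s, hs, hmax⟩ := exists_maximal_linearIndepOn (R ⧸ p) (id : F → F)
  by_cases hfin : s.Finite
  · refine ⟨Submodule.span R s, Submodule.fg_span hfin, fun f => ?_⟩
    by_cases hf : f ∈ s
    · exact ⟨1, fun h1 => ‹p.IsPrime›.ne_top ((Ideal.eq_top_iff_one _).2 h1),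
        by rw [one_smul]; exact Submodule.subset_span hf⟩
    · obtain ⟨a, ha, hmem⟩ := hmax f hf
      obtain ⟨r, rfl⟩ := Ideal.Quotient.mk_surjective a
      refine ⟨r, fun hr => ha (Ideal.Quotient.eq_zero_iff_mem.2 hr), ?_⟩
      rw [Set.image_id, hmk, id] at hmem
      refine Submodule.span_induction (p := fun x _ => x ∈ Submodule.span R s) ?_ ?_ ?_ ?_ hmem
      · exact fun x hx => Submodule.subset_span hx
      · exact Submodule.zero_mem _
      · exact fun x y _ _ hx hy => Submodule.add_mem _ hx hy
      · intro a x _ hx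
        obtain ⟨r, rfl⟩ := Ideal.Quotient.mk_surjective a
        exact Submodule.smul_mem _ r hx
  · exfalso
    have hsinf : Infinite s := Set.infinite_coe_iff.2 hfin
    have hvinf : Infinite (PrimeSpectrum.zeroLocus (p : Set R)) := Set.infinite_coe_iff.2 hinf
    let e := Infinite.natEmbedding s
    let q := Infinite.natEmbedding (PrimeSpectrum.zeroLocus (p : Set R))
    have hli : LinearIndependent (R ⧸ p) (fun n => (e n : F)) :=
      LinearIndependent.comp hs e e.injective
    let φ : (ℕ →₀ (R ⧸ p)) →ₗ[R] F :=
      (Finsupp.linearCombination (R ⧸ p) (fun n => (e n : F))).restrictScalars R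
    have hφ : Function.Injective φ := hli
    have hw := wl_of_inj φ hφ h
    let qI : ℕ → Ideal R := fun n => (q n).1.asIdeal
    have hpq : ∀ n, p ≤ qI n := fun n => (q n).2
    let W : Submodule R (ℕ →₀ (R ⧸ p)) :=
      ⨅ n, Submodule.comap (Finsupp.lapply n) (((qI n).map (Ideal.Quotient.mk p)).restrictScalars R)
    have hWmem : ∀ n r, Finsupp.single n (Ideal.Quotient.mk p r) ∈ W ↔ r ∈ qI n := by
      intro n r
      have h1 : ∀ n r, Ideal.Quotient.mk p r ∈ (qI n).map (Ideal.Quotient.mk p) ↔ r ∈ qI n := by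
        intro n r
        rw [Ideal.mem_quotient_iff_mem (hpq n)]
      simp only [W, Submodule.mem_iInf, Submodule.mem_comap, Finsupp.lapply_apply,
        Submodule.restrictScalars_mem]
      constructor
      · intro h; have := h n; rwa [Finsupp.single_eq_same, h1] at this
      · intro hr k
        by_cases hk : k = n
        · subst hk; rwa [Finsupp.single_eq_same, h1]
        · rw [Finsupp.single_eq_of_ne hk]; exact Submodule.zero_mem _
    have hfinAss := hw W
    have hsub : Set.range qI ⊆ associatedPrimes R ((ℕ →₀ (R ⧸ p)) ⧸ W) := by
      rintro _ ⟨n, rfl⟩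
      refine isAssociatedPrime_iff.2 ⟨(q n).1.isPrime, W.mkQ (Finsupp.single n 1), ?_⟩
      ext r
      rw [Submodule.mem_colon_singleton, ← map_smul, Submodule.mem_bot, Submodule.mkQ_apply, Submodule.Quotient.mk_eq_zero,
        Finsupp.smul_single, ← hWmem]
      have : r • (1 : R ⧸ p) = Ideal.Quotient.mk p r := by
        rw [Algebra.smul_def, mul_one]; rfl
      rw [this]
    have hqinj : Function.Injective qI := by
      intro a b hab
      exact q.injective (Subtype.ext (PrimeSpectrum.ext hab))
    exact (Set.infinite_range_of_injective hqinj) (hfinAss.subset hsub)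

lemma pow_smul_zero_of_support {M : Type u} [AddCommGroup M] [Module R M] (a : Ideal R)
    (hM : Module.support R M ⊆ PrimeSpectrum.zeroLocus (a : Set R)) {x : R} (hx : x ∈ a) (m : M) :
    ∃ n : ℕ, x ^ n • m = 0 := by
  have : x ∈ (Submodule.span R {m}).annihilator.radical := by
    rw [Ideal.radical_eq_sInf, Submodule.mem_sInf]
    rintro q ⟨hq, hqp⟩
    exact hM (Module.mem_support_iff_exists_annihilator.2 ⟨m, hq⟩ : (⟨q, hqp⟩ : PrimeSpectrum R) ∈ _) hx
  obtain ⟨n, hn⟩ := this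
  exact ⟨n, (Submodule.mem_annihilator_span_singleton _ _).1 hn⟩

lemma wl_torsion_of_hom {M : Type u} [AddCommGroup M] [Module R M] (a : Ideal R)
    (h : IsWeaklyLaskerian R ((R ⧸ a) →ₗ[R] M)) :
    IsWeaklyLaskerian R (Submodule.torsionBySet R M (a : Set R)) := by
  refine wl_of_surj (LinearMap.codRestrict _ (LinearMap.applyₗ (Ideal.Quotient.mk a 1)) ?_) ?_ h
  · intro f
    rw [Submodule.mem_torsionBySet_iff]
    rintro ⟨x, hx⟩
    change x • f (Ideal.Quotient.mk a 1) = 0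
    rw [← map_smul]
    have : x • Ideal.Quotient.mk a 1 = Ideal.Quotient.mk a x := by
      rw [Algebra.smul_def, map_one, mul_one]; rfl
    rw [this, Ideal.Quotient.eq_zero_iff_mem.2 hx, map_zero]
  · rintro ⟨m, hm⟩
    rw [Submodule.mem_torsionBySet_iff] at hm
    refine ⟨Submodule.liftQ a (LinearMap.toSpanSingleton R M m) (fun x hx => hm ⟨x, hx⟩), ?_⟩
    refine Subtype.ext ?_
    change (1 : R) • m = m
    rw [one_smul]

lemma loc_artinian [IsNoetherianRing R] {M : Type u} [AddCommGroup M] [Module R M] (a p : Ideal R) [p.IsPrime]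
    (hp : p ∈ a.minimalPrimes)
    (hinf : (PrimeSpectrum.zeroLocus (p : Set R)).Infinite)
    (hM : Module.support R M ⊆ PrimeSpectrum.zeroLocus (a : Set R))
    (hw : IsWeaklyLaskerian R (Submodule.torsionBySet R M (a : Set R))) :
    IsArtinian (Localization.AtPrime p) (LocalizedModule p.primeCompl M) := by
  classical
  let S := Localization.AtPrime p
  let A := LocalizedModule p.primeCompl M
  let φ : M →ₗ[R] A := LocalizedModule.mkLinearMap p.primeCompl M
  have hunit : ∀ (t : p.primeCompl) (L : Submodule S A) (x : A), (t : R) • x ∈ L → x ∈ L := by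
    intro t L x hx
    have hu : IsUnit (algebraMap R S t) := IsLocalization.map_units S t
    obtain ⟨u, hu⟩ := hu
    have : x = (↑(u⁻¹) : S) • (t : R) • x := by
      rw [← algebraMap_smul S (t : R) x, ← hu, smul_smul, Units.inv_mul, one_smul]
    rw [this]
    exact L.smul_mem _ hx
  obtain ⟨s, hs⟩ := (IsNoetherian.noetherian p : p.FG)
  have hsp : ∀ y ∈ s, y ∈ p := fun y hy => hs ▸ Submodule.subset_span hy
  refine art_of_torsion (S := S) (s.image (algebraMap R S)) (A := A) ?_ ?_
  · intro x hx c
    obtain ⟨y, hy, rfl⟩ := Finset.mem_image.1 hx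
    let J := (Submodule.span S {c}).annihilator
    have h1 : a.map (algebraMap R S) ≤ J.radical := by
      rw [Ideal.map_le_iff_le_comap]
      intro z hz
      obtain ⟨⟨m, t⟩, hmt⟩ := IsLocalizedModule.surj p.primeCompl φ c
      obtain ⟨n, hn⟩ := pow_smul_zero_of_support a hM hz m
      refine ⟨n, (Submodule.mem_annihilator_span_singleton _ _).2 ?_⟩
      have : (algebraMap R S z) ^ n • c ∈ (⊥ : Submodule S A) := by
        refine hunit t _ _ ?_
        rw [← map_pow, algebraMap_smul, smul_comm]
        have hmt' : (t : R) • c = φ m := hmt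
        rw [hmt', ← map_smul, hn, map_zero]
        exact Submodule.zero_mem _
      exact this
    have h2 : algebraMap R S y ∈ J.radical := by
      have h3 := IsLocalization.AtPrime.radical_map_of_mem_minimalPrimes (A := S) p a hp
      have h4 : algebraMap R S y ∈ (a.map (algebraMap R S)).radical := by
        rw [h3]; exact Ideal.mem_map_of_mem _ (hsp y hy)
      have h5 := Ideal.radical_mono h1 h4
      rwa [Ideal.radical_idem] at h5
    obtain ⟨n, hn⟩ := h2
    exact ⟨n, (Submodule.mem_annihilator_span_singleton _ _).1 hn⟩
  · let K := Submodule.torsionBySet R M (p : Set R)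
    have hKw : IsWeaklyLaskerian R K := by
      refine wl_of_inj (Submodule.inclusion (p' := Submodule.torsionBySet R M (a : Set R)) ?_)
        (Submodule.inclusion_injective _) hw
      intro m hm
      rw [Submodule.mem_torsionBySet_iff] at hm ⊢
      rintro ⟨x, hx⟩
      exact hm ⟨x, hp.1.2 hx⟩
    obtain ⟨N, hN, hNs⟩ := wl_generic_fg p hinf (Submodule.torsionBySet_isTorsionBySet _) hKw
    obtain ⟨g, rfl⟩ := hN
    let T := Submodule.torsionBySet S A ((s.image (algebraMap R S) : Finset S) : Set S)
    let L : Submodule S A := Submodule.span S ((fun k : K => φ k) '' (g : Set K))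
    have hLfg : L.FG := Submodule.fg_span (g.finite_toSet.image _)
    have hNL : ∀ k ∈ Submodule.span R (g : Set K), φ k ∈ L := by
      intro k hk
      have : Submodule.span R (g : Set K) ≤ (L.restrictScalars R).comap (φ ∘ₗ K.subtype) := by
        rw [Submodule.span_le]
        intro k hk
        exact Submodule.subset_span ⟨k, hk, rfl⟩
      exact this hk
    have hTL : T ≤ L := by
      intro c hc
      rw [Submodule.mem_torsionBySet_iff] at hc
      obtain ⟨⟨m, t⟩, hmt⟩ := IsLocalizedModule.surj p.primeCompl φ c
      have hmt' : (t : R) • c = φ m := hmt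
      refine hunit t _ _ ?_
      rw [hmt']
      have h1 : ∀ y : s, ∃ u : p.primeCompl, u • (y : R) • m = 0 := by
        rintro ⟨y, hy⟩
        rw [← IsLocalizedModule.eq_zero_iff p.primeCompl φ, map_smul, ← hmt', smul_comm]
        have := hc ⟨algebraMap R S y, by simpa using ⟨y, hy, rfl⟩⟩
        have h2 : y • c = 0 := by rw [← algebraMap_smul S]; exact this
        rw [h2, smul_zero]
      choose u hu using h1
      let v : p.primeCompl := ∏ y : s, u y
      have hvK : v • m ∈ K := by
        rw [Submodule.mem_torsionBySet_iff]
        rintro ⟨x, hx⟩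
        have hle : p ≤ (Submodule.span R {v • m}).annihilator := by
          refine hs.symm.le.trans (Submodule.span_le.2 ?_)
          intro y hy
          refine (Submodule.mem_annihilator_span_singleton _ _).2 ?_
          obtain ⟨w, hw⟩ : u ⟨y, hy⟩ ∣ v := Finset.dvd_prod_of_mem u (Finset.mem_univ _)
          rw [hw, mul_comm, mul_smul, smul_comm, smul_comm y]
          rw [hu ⟨y, hy⟩, smul_zero]
        exact (Submodule.mem_annihilator_span_singleton _ _).1 (hle hx)
      obtain ⟨w, hw, hwN⟩ := hNs ⟨v • m, hvK⟩
      refine hunit v _ _ (hunit ⟨w, hw⟩ _ _ ?_)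
      have := hNL _ hwN
      have h3 : φ (w • (v : R) • m) ∈ L := this
      rwa [map_smul, map_smul] at h3
    have hfin : Module.Finite S L := Module.Finite.iff_fg.2 hLfg
    have hnL : IsNoetherian S L := inferInstance
    have hnT : IsNoetherian S T := isNoetherian_of_le hTL
    have hmax : (p.map (algebraMap R S)).IsMaximal := by
      rw [Localization.AtPrime.map_eq_maximalIdeal]; infer_instance
    have hss : IsSemisimpleModule S T := by
      refine semisimple_of_killed (p.map (algebraMap R S)) ?_
      rintro ⟨c, hc⟩ ⟨x, hx⟩
      refine Subtype.ext ?_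
      change x • c = 0
      have hle : p.map (algebraMap R S) ≤ (Submodule.span S {c}).annihilator := by
        rw [Ideal.map_le_iff_le_comap]
        refine hs.symm.le.trans (Submodule.span_le.2 ?_)
        intro y hy
        refine (Submodule.mem_annihilator_span_singleton _ _).2 ?_
        rw [Submodule.mem_torsionBySet_iff] at hc
        exact hc ⟨algebraMap R S y, by simpa using ⟨y, hy, rfl⟩⟩
      exact (Submodule.mem_annihilator_span_singleton _ _).1 (hle hx)
    exact ((IsSemisimpleModule.finite_tfae (R := S) (M := T)).out 1 2).1 hnT

lemma loc_mul [IsNoetherianRing R] {M : Type u} [AddCommGroup M] [Module R M] (a p : Ideal R) [p.IsPrime]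
    (hp : p ∈ a.minimalPrimes)
    (hA : IsArtinian (Localization.AtPrime p) (LocalizedModule p.primeCompl M)) :
    ∃ Q : Finset (Ideal R), (∀ q ∈ Q, q.IsPrime ∧ ¬ a ≤ q) ∧
      ∀ x ∈ a, (∀ q ∈ Q, x ∉ q) → ∃ L : Submodule R M, L.FG ∧ 
        ∀ m : M, ∃ t ∉ p, t • m ∈ LinearMap.range (LinearMap.lsmul R M x) ⊔ L := by
  classical
  let S := Localization.AtPrime p
  let A := LocalizedModule p.primeCompl M
  let φ : M →ₗ[R] A := LocalizedModule.mkLinearMap p.primeCompl M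
  have hmax : (p.map (algebraMap R S)).IsMaximal := by
    rw [Localization.AtPrime.map_eq_maximalIdeal]; infer_instance
  let b := a.map (algebraMap R S)
  have hrad := IsLocalization.AtPrime.radical_map_of_mem_minimalPrimes (A := S) p a hp
  obtain ⟨j, hj⟩ := Ideal.exists_pow_le_of_le_radical_of_fg (I := p.map (algebraMap R S)) (J := b) hrad.ge
    (IsNoetherian.noetherian _)
  obtain ⟨Q, hQ, H⟩ := artinian_cofinite_mul (S := S) (A := A) b (by
    intro N k hN
    have : IsNoetherian S N := noeth_of_art_killed (p.map (algebraMap R S)) (j * k) inferInstance (by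
      rintro x hx ⟨c, hc⟩
      refine Subtype.ext (hN x ?_ c hc)
      rw [pow_mul] at hx
      exact Ideal.pow_right_mono hj k hx)
    exact (Module.Finite.iff_fg (N := N)).1 inferInstance) ⊤
  refine ⟨Q.image (Ideal.comap (algebraMap R S)), ?_, ?_⟩
  · intro q hq
    obtain ⟨q, hq', rfl⟩ := Finset.mem_image.1 hq
    obtain ⟨h1, h2⟩ := hQ q hq'
    exact ⟨Ideal.comap_isPrime _ _, fun h => h2 (Ideal.map_le_iff_le_comap.2 h)⟩
  · intro x hx hxQ
    obtain ⟨L, hL, hle⟩ := H (algebraMap R S x) (Ideal.mem_map_of_mem _ hx)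
      (fun q hq hxq => hxQ _ (Finset.mem_image_of_mem _ hq) hxq)
    obtain ⟨g, rfl⟩ := hL
    choose c hc using IsLocalizedModule.surj p.primeCompl φ
    let L' : Submodule R M := Submodule.span R ((fun y => (c y).1) '' (g : Set A))
    have hLL : Submodule.span S (g : Set A) ≤ Submodule.localized' S p.primeCompl φ L' := by
      rw [Submodule.span_le]
      intro y hy
      refine (Submodule.mem_localized' _ _ _ _ _).2 ⟨(c y).1, Submodule.subset_span ⟨y, hy, rfl⟩, (c y).2, ?_⟩
      rw [IsLocalizedModule.mk'_eq_iff]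
      exact (hc y).symm
    refine ⟨L', Submodule.fg_span (g.finite_toSet.image _), fun m => ?_⟩
    obtain ⟨_, ⟨y, -, rfl⟩, l, hl, hyl⟩ := Submodule.mem_sup.1 (hle (Submodule.mem_top : φ m ∈ ⊤))
    obtain ⟨n, hn, t, rfl⟩ := (Submodule.mem_localized' _ _ _ _ _).1 (hLL hl)
    obtain ⟨⟨m', t'⟩, hmt⟩ := IsLocalizedModule.surj p.primeCompl φ y
    have hmt' : (t' : R) • y = φ m' := hmt
    have hn' : (t : R) • IsLocalizedModule.mk' φ n t = φ n := IsLocalizedModule.mk'_cancel' φ n t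
    have hyl' : x • y + IsLocalizedModule.mk' φ n t = φ m := by
      rw [← hyl, LinearMap.lsmul_apply, algebraMap_smul]
    have key : φ (((t : R) * t') • m - (x • (t : R) • m' + (t' : R) • n)) = 0 := by
      rw [map_sub, map_add, map_smul, map_smul, map_smul, map_smul, ← hmt', ← hn', ← hyl']
      module
    obtain ⟨w, hw⟩ := (IsLocalizedModule.eq_zero_iff p.primeCompl φ).1 key
    have hw' : (w : R) • (((t : R) * t') • m - (x • (t : R) • m' + (t' : R) • n)) = 0 := hw
    refine ⟨w * (t * t'), (w * (t * t')).2, ?_⟩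
    rw [smul_sub, sub_eq_zero, smul_smul] at hw'
    rw [hw', smul_add]
    refine Submodule.add_mem _ (Submodule.mem_sup_left ⟨(w : R) • (t : R) • m', ?_⟩)
      (Submodule.mem_sup_right (Submodule.smul_mem _ _ (Submodule.smul_mem _ _ hn)))
    simp only [LinearMap.lsmul_apply]
    rw [smul_comm]

end LocLemmas


section KeyLemma
variable {R}

lemma min_of_infinite (a : Ideal R) (hdim : ringKrullDim (R ⧸ a) = 1) (p : PrimeSpectrum R)
    (hap : a ≤ p.asIdeal) (hinf : (PrimeSpectrum.zeroLocus (p.asIdeal : Set R)).Infinite) :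
    p.asIdeal ∈ a.minimalPrimes := by
  by_contra hmin
  obtain ⟨q, hq, hqp⟩ := Ideal.exists_minimalPrimes_le hap
  have hqp' : q < p.asIdeal := lt_of_le_of_ne hqp (by rintro rfl; exact hmin hq)
  obtain ⟨r, hr, hrp⟩ : ∃ r ∈ PrimeSpectrum.zeroLocus (p.asIdeal : Set R), r ≠ p := by
    by_contra! h
    exact hinf ((Set.finite_singleton p).subset h)
  have hpr : p.asIdeal < r.asIdeal := lt_of_le_of_ne hr (fun h => hrp (PrimeSpectrum.ext h.symm))
  rw [ringKrullDim_quotient] at hdim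
  let x0 : PrimeSpectrum.zeroLocus (a : Set R) := ⟨⟨q, hq.1.1⟩, hq.1.2⟩
  let x1 : PrimeSpectrum.zeroLocus (a : Set R) := ⟨p, hap⟩
  let x2 : PrimeSpectrum.zeroLocus (a : Set R) := ⟨r, hap.trans hpr.le⟩
  have h01 : x0 < x1 := hqp'
  have h12 : x1 < x2 := hpr
  let s : LTSeries (PrimeSpectrum.zeroLocus (a : Set R)) :=
    { length := 2
      toFun := ![x0, x1, x2]
      step := by
        intro i
        fin_cases i
        · exact h01
        · exact h12 }
  have := Order.LTSeries.length_le_krullDim s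
  rw [hdim] at this
  change ((2 : ℕ) : WithBot ℕ∞) ≤ 1 at this
  norm_cast at this

lemma supp_finite [IsNoetherianRing R] (a : Ideal R) (hdim : ringKrullDim (R ⧸ a) = 1)
    {E : Type u} [AddCommGroup E] [Module R E]
    (hE : Module.support R E ⊆ PrimeSpectrum.zeroLocus (a : Set R))
    (hw : IsWeaklyLaskerian R (Submodule.torsionBySet R E (a : Set R)))
    (hT : ∀ p ∈ a.minimalPrimes, (PrimeSpectrum.zeroLocus (p : Set R)).Infinite →
      ∀ e : E, ∃ t ∉ p, t • e = 0) : (Module.support R E).Finite := by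
  have hass := wl_ass_finite hw
  have hfin : ∀ q ∈ associatedPrimes R (Submodule.torsionBySet R E (a : Set R)),
      (PrimeSpectrum.zeroLocus (q : Set R)).Finite := by
    intro q hq
    by_contra hinf
    obtain ⟨hqp, m, hm⟩ := isAssociatedPrime_iff.1 hq
    have hmq : ∀ r, r ∈ q ↔ r • m = 0 := by
      intro r
      rw [hm, Submodule.mem_colon_singleton, Submodule.mem_bot]
    have haq : a ≤ q := by
      intro x hx
      rw [hmq]
      exact Subtype.ext ((Submodule.mem_torsionBySet_iff _ _).1 m.2 ⟨x, hx⟩)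
    obtain ⟨t, ht, htm⟩ := hT q (min_of_infinite a hdim ⟨q, hqp⟩ haq hinf) hinf m.1
    exact ht ((hmq t).2 (Subtype.ext htm))
  refine (hass.biUnion hfin).subset ?_
  intro r hr
  obtain ⟨e, he⟩ := Module.mem_support_iff_exists_annihilator.1 hr
  obtain ⟨q, hq, hqr⟩ := Ideal.exists_minimalPrimes_le he
  have hq' : q ∈ associatedPrimes R (Submodule.span R {e}) :=
    Module.associatedPrimes.minimalPrimes_annihilator_subset_associatedPrimes R (Submodule.span R {e}) hq
  obtain ⟨hqp, m, hm⟩ := isAssociatedPrime_iff.1 hq'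
  have hmq : ∀ r, r ∈ q ↔ r • m.1 = 0 := by
    intro r
    rw [hm, Submodule.mem_colon_singleton, Submodule.mem_bot]
    exact Subtype.ext_iff
  have haq : a ≤ q := by
    have : (⟨q, hqp⟩ : PrimeSpectrum R) ∈ Module.support R E := by
      refine Module.mem_support_iff_exists_annihilator.2 ⟨m.1, ?_⟩
      intro r hr
      exact (hmq r).2 ((Submodule.mem_annihilator_span_singleton _ _).1 hr)
    exact hE this
  refine Set.mem_biUnion (x := q) ?_ hqr
  refine isAssociatedPrime_iff.2 ⟨hqp, ⟨m.1, (Submodule.mem_torsionBySet_iff _ _).2 (fun x => (hmq _).1 (haq x.2))⟩, ?_⟩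
  ext r
  rw [hmq, Submodule.mem_colon_singleton, Submodule.mem_bot]
  constructor
  · intro h
    exact Subtype.ext h
  · intro h
    simpa using Subtype.ext_iff.1 h

lemma exists_good_elt [IsNoetherianRing R] (a : Ideal R)
    {M : Type u} [AddCommGroup M] [Module R M]
    (hM : Module.support R M ⊆ PrimeSpectrum.zeroLocus (a : Set R))
    (hw : IsWeaklyLaskerian R (Submodule.torsionBySet R M (a : Set R))) :
    ∃ x ∈ a, ∃ L : Submodule R M, L.FG ∧ ∀ p ∈ a.minimalPrimes,
      (PrimeSpectrum.zeroLocus (p : Set R)).Infinite →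
      ∀ m : M, ∃ t ∉ p, t • m ∈ LinearMap.range (LinearMap.lsmul R M x) ⊔ L := by
  classical
  let T := {p : Ideal R | p ∈ a.minimalPrimes ∧ (PrimeSpectrum.zeroLocus (p : Set R)).Infinite}
  have hTf : T.Finite := (Ideal.finite_minimalPrimes_of_isNoetherianRing R a).subset (fun p hp => hp.1)
  have hTT : Finite T := hTf
  have : Fintype T := Fintype.ofFinite T
  have H : ∀ p : T, ∃ Q : Finset (Ideal R), (∀ q ∈ Q, q.IsPrime ∧ ¬ a ≤ q) ∧
      ∀ x ∈ a, (∀ q ∈ Q, x ∉ q) → ∃ L : Submodule R M, L.FG ∧ 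
        ∀ m : M, ∃ t ∉ p.1, t • m ∈ LinearMap.range (LinearMap.lsmul R M x) ⊔ L := by
    rintro ⟨p, hp, hinf⟩
    have := hp.1.1
    exact loc_mul a p hp (loc_artinian a p hp hinf hM hw)
  choose Q hQ HQ using H
  let QQ := Finset.univ.biUnion Q
  obtain ⟨x, hx, hxQ⟩ : ∃ x ∈ a, ∀ q ∈ QQ, x ∉ q := by
    by_contra! hcon
    have h1 : (a : Set R) ⊆ ⋃ i ∈ (↑QQ : Set (Ideal R)), ((id i : Ideal R) : Set R) := by
      intro x hx
      obtain ⟨q, hq, hxq⟩ := hcon x hx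
      exact Set.mem_biUnion hq hxq
    have hprime : ∀ q ∈ QQ, q.IsPrime ∧ ¬ a ≤ q := by
      intro q hq
      obtain ⟨p, -, hp⟩ := Finset.mem_biUnion.1 hq
      exact hQ p q hp
    obtain ⟨q, hq, hle⟩ := (Ideal.subset_union_prime (f := id) ⊥ ⊥ (fun q hq _ _ => (hprime q hq).1)).1 h1
    exact (hprime q hq).2 hle
  choose L hL hLm using fun p => HQ p x hx (fun q hq => hxQ q (Finset.mem_biUnion.2 ⟨p, Finset.mem_univ _, hq⟩))
  refine ⟨x, hx, ⨆ p, L p, Submodule.fg_iSup _ hL, ?_⟩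
  intro p hp hinf m
  obtain ⟨t, ht, h⟩ := hLm ⟨p, hp, hinf⟩ m
  exact ⟨t, ht, sup_le_sup_left (le_iSup L _) _ h⟩

lemma key_aux [IsNoetherianRing R] (a : Ideal R) (hdim : ringKrullDim (R ⧸ a) = 1) (J : Ideal R) :
    ∀ (M : Type u) [AddCommGroup M] [Module R M], (∀ j ∈ J, ∀ m : M, j • m = 0) →
    Module.support R M ⊆ PrimeSpectrum.zeroLocus (a : Set R) →
    XW (R := R) (R ⧸ a) 0 M → XW (R := R) (R ⧸ a) 1 M → ∀ i, XW (R := R) (R ⧸ a) i M := by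
  induction J using IsWellFounded.induction (· > · : Ideal R → Ideal R → Prop) with
  | ind J ih =>
  intro M _ _ hJ hM h0 h1
  have hwt : ∀ (E : Type u) [AddCommGroup E] [Module R E], XW (R := R) (R ⧸ a) 0 E →
      IsWeaklyLaskerian R (Submodule.torsionBySet R E (a : Set R)) := by
    intro E _ _ h
    exact wl_torsion_of_hom a ((XW_zero_iff _).1 h)
  obtain ⟨x, hx, L, hL, hgood⟩ := exists_good_elt a hM (hwt M h0)
  have hLfin : Module.Finite R L := Module.Finite.iff_fg.2 hL
  have hLX : ∀ i, XW (R := R) (R ⧸ a) i L := fun i => XW_of_wl _ wl_of_finite i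
  let M' := M ⧸ L
  have hM' : Module.support R M' ⊆ PrimeSpectrum.zeroLocus (a : Set R) :=
    (Module.support_subset_of_surjective L.mkQ L.mkQ_surjective).trans hM
  have hex := LinearMap.exact_subtype_mkQ L
  have h0' : XW (R := R) (R ⧸ a) 0 M' :=
    XW_three _ L.subtype L.mkQ L.subtype_injective L.mkQ_surjective hex 0 h0 (hLX 1)
  have h1' : XW (R := R) (R ⧸ a) 1 M' :=
    XW_three _ L.subtype L.mkQ L.subtype_injective L.mkQ_surjective hex 1 h1 (hLX 2)
  suffices hS : ∀ i, XW (R := R) (R ⧸ a) i M' from fun i =>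
    XW_two _ L.subtype L.mkQ L.subtype_injective L.mkQ_surjective hex i (hLX i) (hS i)
  have hJ' : ∀ j ∈ J, ∀ m : M', j • m = 0 := by
    intro j hj m
    obtain ⟨m, rfl⟩ := L.mkQ_surjective m
    rw [← map_smul, hJ j hj, map_zero]
  have hgood' : ∀ p ∈ a.minimalPrimes, (PrimeSpectrum.zeroLocus (p : Set R)).Infinite →
      ∀ m : M', ∃ t ∉ p, t • m ∈ LinearMap.range (LinearMap.lsmul R M' x) := by
    intro p hp hinf m
    obtain ⟨m, rfl⟩ := L.mkQ_surjective m
    obtain ⟨t, ht, h⟩ := hgood p hp hinf m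
    refine ⟨t, ht, ?_⟩
    obtain ⟨_, ⟨y, rfl⟩, l, hl, hyl⟩ := Submodule.mem_sup.1 h
    refine ⟨L.mkQ y, ?_⟩
    rw [← map_smul, ← hyl, map_add, LinearMap.lsmul_apply, LinearMap.lsmul_apply, map_smul]
    have : L.mkQ l = 0 := (Submodule.Quotient.mk_eq_zero L).2 hl
    rw [this, add_zero]
  by_cases hxJ : x ∈ J
  · refine fun i => XW_of_wl _ (wl_of_support_finite (supp_finite a hdim hM' (hwt M' h0') ?_)) i
    intro p hp hinf m
    obtain ⟨t, ht, y, hy⟩ := hgood' p hp hinf m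
    refine ⟨t, ht, ?_⟩
    rw [← hy]
    exact hJ' x hxJ y
  · let μ : M' →ₗ[R] M' := LinearMap.lsmul R M' x
    let K := LinearMap.ker μ
    let I := LinearMap.range μ
    let C := M' ⧸ I
    have exK : Function.Exact K.subtype μ.rangeRestrict := by
      intro m
      constructor
      · intro h
        exact ⟨⟨m, congrArg Subtype.val h⟩, rfl⟩
      · rintro ⟨k, rfl⟩
        exact Subtype.ext k.2
    have sK := μ.surjective_rangeRestrict
    have exI := LinearMap.exact_subtype_mkQ I
    have hI0 : XW (R := R) (R ⧸ a) 0 I := XW_one_zero _ I.subtype I.subtype_injective h0'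
    have hK0 : XW (R := R) (R ⧸ a) 0 K := XW_one_zero _ K.subtype K.subtype_injective h0'
    have hK1 : XW (R := R) (R ⧸ a) 1 K :=
      XW_one _ K.subtype μ.rangeRestrict K.subtype_injective sK exK 0 hI0 h1'
    have hKall : ∀ i, XW (R := R) (R ⧸ a) i K := by
      refine ih (J ⊔ Ideal.span {x}) ?_ K ?_ ?_ hK0 hK1
      · refine lt_of_le_of_ne le_sup_left ?_
        intro h
        apply hxJ
        rw [h]
        exact Ideal.mem_sup_right (Ideal.mem_span_singleton_self x)
      · intro j hj k
        obtain ⟨u, hu, v, hv, rfl⟩ := Submodule.mem_sup.1 hj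
        obtain ⟨w, rfl⟩ := Ideal.mem_span_singleton'.1 hv
        refine Subtype.ext ?_
        change (u + w * x) • k.1 = 0
        have hk : x • k.1 = 0 := k.2
        rw [add_smul, hJ' u hu, mul_smul, hk, smul_zero, add_zero]
      · exact (Module.support_subset_of_injective K.subtype K.subtype_injective).trans hM'
    have hI1 : XW (R := R) (R ⧸ a) 1 I :=
      XW_three _ K.subtype μ.rangeRestrict K.subtype_injective sK exK 1 h1' (hKall 2)
    have hC0 : XW (R := R) (R ⧸ a) 0 C :=
      XW_three _ I.subtype I.mkQ I.subtype_injective I.mkQ_surjective exI 0 h0' hI1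
    have hCs : Module.support R C ⊆ PrimeSpectrum.zeroLocus (a : Set R) :=
      (Module.support_subset_of_surjective I.mkQ I.mkQ_surjective).trans hM'
    have hCall : ∀ i, XW (R := R) (R ⧸ a) i C := by
      refine fun i => XW_of_wl _ (wl_of_support_finite (supp_finite a hdim hCs (hwt C hC0) ?_)) i
      intro p hp hinf m
      obtain ⟨m, rfl⟩ := I.mkQ_surjective m
      obtain ⟨t, ht, hy⟩ := hgood' p hp hinf m
      refine ⟨t, ht, ?_⟩
      rw [← map_smul]
      exact (Submodule.Quotient.mk_eq_zero I).2 hy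
    intro i
    refine XW_of_factor _ x ?_ i μ.rangeRestrict I.subtype (fun _ => rfl) ?_ ?_
    · intro n
      obtain ⟨r, rfl⟩ := Ideal.Quotient.mk_surjective n
      have : x • Ideal.Quotient.mk a r = Ideal.Quotient.mk a (x * r) := rfl
      rw [this]
      exact Ideal.Quotient.eq_zero_iff_mem.2 (a.mul_mem_right r hx)
    · exact wl_ker_postcomp _ K.subtype μ.rangeRestrict i K.subtype_injective sK exK (hKall i)
    · exact wl_ker_postcomp_inj _ I.subtype I.mkQ i I.subtype_injective I.mkQ_surjective exI hCall

/-- weakly cofinite, in terms of `XW` -/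
def WC (a : Ideal R) (M : Type u) [AddCommGroup M] [Module R M] : Prop :=
  Module.support R M ⊆ PrimeSpectrum.zeroLocus (a : Set R) ∧ ∀ i, XW (R := R) (R ⧸ a) i M

lemma wc_ker [IsNoetherianRing R] (a : Ideal R) (hdim : ringKrullDim (R ⧸ a) = 1)
    {M N : Type u} [AddCommGroup M] [Module R M] [AddCommGroup N] [Module R N]
    (hM : WC a M) (hN : WC a N) (f : M →ₗ[R] N) :
    WC a (LinearMap.ker f) ∧ WC a (LinearMap.range f) := by
  let K := LinearMap.ker f
  have exK : Function.Exact K.subtype f.rangeRestrict := by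
    intro m
    constructor
    · intro h
      exact ⟨⟨m, congrArg Subtype.val h⟩, rfl⟩
    · rintro ⟨k, rfl⟩
      exact Subtype.ext k.2
  have sK := f.surjective_rangeRestrict
  have hI0 : XW (R := R) (R ⧸ a) 0 (LinearMap.range f) :=
    XW_one_zero _ (LinearMap.range f).subtype (LinearMap.range f).subtype_injective (hN.2 0)
  have hK0 : XW (R := R) (R ⧸ a) 0 K := XW_one_zero _ K.subtype K.subtype_injective (hM.2 0)
  have hK1 : XW (R := R) (R ⧸ a) 1 K :=
    XW_one _ K.subtype f.rangeRestrict K.subtype_injective sK exK 0 hI0 (hM.2 1)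
  have hKs : Module.support R K ⊆ PrimeSpectrum.zeroLocus (a : Set R) :=
    (Module.support_subset_of_injective K.subtype K.subtype_injective).trans hM.1
  have hK := key_aux a hdim ⊥ K (by
    intro j hj k
    rw [Ideal.mem_bot] at hj
    rw [hj, zero_smul]) hKs hK0 hK1
  refine ⟨⟨hKs, hK⟩, ?_, fun i => ?_⟩
  · exact (Module.support_subset_of_surjective f.rangeRestrict sK).trans hM.1
  · exact XW_three _ K.subtype f.rangeRestrict K.subtype_injective sK exK i (hM.2 i) (hK (i+1))

lemma wc_congr (a : Ideal R) {M N : Type u} [AddCommGroup M] [Module R M] [AddCommGroup N] [Module R N]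
    (e : M ≃ₗ[R] N) (h : WC a M) : WC a N :=
  ⟨(Module.support_subset_of_surjective e.toLinearMap e.surjective).trans h.1,
    fun i => XW_congr _ e i (h.2 i)⟩

lemma wc_quot (a : Ideal R) {M : Type u} [AddCommGroup M] [Module R M] (B : Submodule R M)
    (hM : WC a M) (hB : WC a B) : WC a (M ⧸ B) :=
  ⟨(Module.support_subset_of_surjective B.mkQ B.mkQ_surjective).trans hM.1,
    fun i => XW_three _ B.subtype B.mkQ B.subtype_injective B.mkQ_surjective
      (LinearMap.exact_subtype_mkQ B) i (hM.2 i) (hB.2 (i+1))⟩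

lemma wc_iff (a : Ideal R) (M : ModuleCat.{u} R) : IsWeaklyCofinite R a M ↔ WC a M := by
  constructor
  · rintro ⟨h1, h2⟩
    exact ⟨h1, fun i => (XW_iff _ i M).1 (h2 i)⟩
  · rintro ⟨h1, h2⟩
    exact ⟨h1, fun i => (XW_iff _ i M).2 (h2 i)⟩

lemma wc_homology [IsNoetherianRing R] (a : Ideal R) (hdim : ringKrullDim (R ⧸ a) = 1)
    (S : ShortComplex (ModuleCat.{u} R)) (h1 : WC a S.X₁) (h2 : WC a S.X₂) (h3 : WC a S.X₃) :
    WC a S.homology := by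
  have hZ : WC a (LinearMap.ker S.g.hom) := (wc_ker a hdim h2 h3 S.g.hom).1
  have hB : WC a (LinearMap.range S.moduleCatToCycles) := (wc_ker a hdim h1 hZ _).2
  have hH := wc_quot a (LinearMap.range S.moduleCatToCycles) hZ hB
  exact wc_congr a S.moduleCatHomologyIso.symm.toLinearEquiv hH

end KeyLemma


theorem stmt17 [IsNoetherianRing R] (𝔞 : Ideal R) (hdim : ringKrullDim (R ⧸ 𝔞) = 1)
    (X : CochainComplex (ModuleCat.{u} R) ℤ)
    (hX : ∀ i : ℤ, IsWeaklyCofinite R 𝔞 (X.X i)) :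
    ∀ i : ℤ, IsWeaklyCofinite R 𝔞 (X.homology i) := by
  intro i
  rw [wc_iff]
  exact wc_homology 𝔞 hdim (X.sc i) ((wc_iff _ _).1 (hX _)) ((wc_iff _ _).1 (hX _)) ((wc_iff _ _).1 (hX _))
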